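/- Let H be a Hopf algebra over a field k, let e ∈ H be a subcentral idempotent, let A_e be the smallest right coideal subalgebra of H containing e, and let π : H → H/(H·A_e⁺) be the canonical k-linear quotient map. Then {x ∈ H·e : (π ⊗ id)(Δ(x)) = π(1_H) ⊗ x} = {a·e : a ∈ H with (π ⊗ id)(Δ(a)) = π(1_H) ⊗ a}; that is, the coinvariant elements of the left ideal H·e are exactly the products a·e where a runs through the coinvariants of H. -/

import Mathlib

open TensorProduct

/-!
In the quotient `π : H → H / H·M⁺` right multiplication by `b ∈ M` is the scalar `ε(b)`. If `M` is a
right coideal, then `Δ(b) ∈ M ⊗ H`, so for coinvariant `a` and `b ∈ M`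
`π(a₍₁₎ b₍₁₎) ⊗ a₍₂₎ b₍₂₎ = π(a₍₁₎) ⊗ a₍₂₎ ε(b₍₁₎) b₍₂₎ = π(1) ⊗ a b`:
right multiplication by `M` preserves the coinvariants. For an idempotent `e ∈ M` this gives one
inclusion, and the other holds because every `x ∈ H·e` satisfies `x = x * e`.
-/

/-- A right coideal of a coalgebra `C`: a submodule `M` with `Δ(M) ⊆ M ⊗ C`, where `M ⊗ C` stands
for its image in `C ⊗ C`. -/
def IsRightCoideal {R C : Type*} [CommSemiring R] [AddCommMonoid C] [Module R C] [Coalgebra R C]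
    (M : Submodule R C) : Prop :=
  ∀ a ∈ M, Coalgebra.comul (R := R) a ∈
    Submodule.span R {x : C ⊗[R] C | ∃ b ∈ M, ∃ c : C, x = b ⊗ₜ[R] c}

section Coinvariants

variable {R H Q : Type*} [CommSemiring R] [Semiring H] [Bialgebra R H]
  [AddCommMonoid Q] [Module R Q]

/-- The coinvariants of a bialgebra `H` along a linear map `π` out of `H`: the elements `x` with
`(π ⊗ id)(Δ(x)) = π(1) ⊗ x`. -/
def coinvariants (π : H →ₗ[R] Q) : Submodule R H :=
  LinearMap.eqLocus (TensorProduct.map π LinearMap.id ∘ₗ Coalgebra.comul)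
    (TensorProduct.mk R Q H (π 1))

theorem mem_coinvariants {π : H →ₗ[R] Q} {x : H} :
    x ∈ coinvariants π ↔
      TensorProduct.map π LinearMap.id (Coalgebra.comul (R := R) x) = π 1 ⊗ₜ[R] x :=
  Iff.rfl

theorem map_id_mul_of_mem_span_tmul {π : H →ₗ[R] Q} {M : Submodule R H}
    (hπ : ∀ h, ∀ b ∈ M, π (h * b) = Coalgebra.counit (R := R) b • π h) (z : H ⊗[R] H)
    {y : H ⊗[R] H}
    (hy : y ∈ Submodule.span R {x : H ⊗[R] H | ∃ b ∈ M, ∃ c : H, x = b ⊗ₜ[R] c}) :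
    TensorProduct.map π LinearMap.id (z * y) =
      (LinearMap.mulRight R (TensorProduct.lid R H (Coalgebra.counit.rTensor H y))).lTensor Q
        (TensorProduct.map π LinearMap.id z) := by
  induction z with
  | zero => simp only [zero_mul, map_zero]
  | add z w hz hw => simp only [add_mul, map_add, hz, hw]
  | tmul u v =>
    induction hy using Submodule.span_induction with
    | mem y hy =>
      obtain ⟨b, hb, c, rfl⟩ := hy
      simp [hπ u b hb, TensorProduct.smul_tmul]
    | zero => simp
    | add y w _ _ hy hw => simp_all [mul_add, TensorProduct.tmul_add]
    | smul r y _ hy => simp_all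

theorem mul_mem_coinvariants {π : H →ₗ[R] Q} {M : Submodule R H} (hM : IsRightCoideal M)
    (hπ : ∀ h, ∀ b ∈ M, π (h * b) = Coalgebra.counit (R := R) b • π h)
    {a b : H} (ha : a ∈ coinvariants π) (hb : b ∈ M) : a * b ∈ coinvariants π := by
  have counit_comul :
      TensorProduct.lid R H (Coalgebra.counit.rTensor H (Coalgebra.comul (R := R) b)) = b := by
    rw [Coalgebra.rTensor_counit_comul, TensorProduct.lid_tmul, one_smul]
  rw [mem_coinvariants] at ha ⊢
  calc TensorProduct.map π LinearMap.id (Coalgebra.comul (R := R) (a * b))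
    _ = (LinearMap.mulRight R b).lTensor Q
          (TensorProduct.map π LinearMap.id (Coalgebra.comul (R := R) a)) := by
      rw [Bialgebra.comul_mul, map_id_mul_of_mem_span_tmul hπ _ (hM b hb), counit_comul]
    _ = π 1 ⊗ₜ[R] (a * b) := by
      rw [ha, LinearMap.lTensor_tmul, LinearMap.mulRight_apply]

end Coinvariants

section Quotient

variable {R H : Type*} [CommRing R] [Ring H] [Bialgebra R H]

/-- The left ideal `H·M⁺` generated by `M⁺ = M ∩ ker ε`, encoded as an `R`-submodule because only
the `R`-linear quotient `H / H·M⁺` is needed. -/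
def leftIdealOfCounitKer (M : Submodule R H) : Submodule R H :=
  Submodule.span R
    {x : H | ∃ (h : H) (a : H), a ∈ M ∧ Coalgebra.counit (R := R) a = 0 ∧ x = h * a}

theorem mkQ_leftIdealOfCounitKer_mul {M : Submodule R H} (hone : 1 ∈ M) (h : H) {b : H}
    (hb : b ∈ M) :
    (leftIdealOfCounitKer M).mkQ (h * b) =
      Coalgebra.counit (R := R) b • (leftIdealOfCounitKer M).mkQ h := by
  rw [← map_smul, Submodule.mkQ_apply, Submodule.mkQ_apply, Submodule.Quotient.eq]
  refine Submodule.subset_span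
    ⟨h, b - Coalgebra.counit (R := R) b • 1, M.sub_mem hb (M.smul_mem _ hone), ?_, ?_⟩
  · rw [map_sub, map_smul, Bialgebra.counit_one, smul_eq_mul, mul_one, sub_self]
  · rw [mul_sub, mul_smul_comm, mul_one]

theorem stmt7_general {M : Submodule R H} (hM : IsRightCoideal M) (hone : 1 ∈ M) {e : H}
    (heM : e ∈ M) (he : IsIdempotentElem e) :
    {x : H | (∃ h : H, x = h * e) ∧ x ∈ coinvariants (leftIdealOfCounitKer M).mkQ} =
      {x : H | ∃ a ∈ coinvariants (leftIdealOfCounitKer M).mkQ, x = a * e} := by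
  ext x
  constructor
  · rintro ⟨⟨h, rfl⟩, hx⟩
    exact ⟨h * e, hx, by rw [mul_assoc, he.eq]⟩
  · rintro ⟨a, ha, rfl⟩
    exact ⟨⟨a, rfl⟩,
      mul_mem_coinvariants hM (fun h _ => mkQ_leftIdealOfCounitKer_mul hone h) ha heM⟩

end Quotient

/-- let `e ∈ H` be a subcentral idempotent, `A` the smallest right coideal
subalgebra containing `e`, and `π : H → H/(H·A⁺)` the quotient map. Then the coinvariant
elements of the left ideal `H·e` are exactly the products `a·e` where `a` runs through
the coinvariants of `H`. -/
theorem stmt7 (k H : Type*) [Field k] [Ring H] [HopfAlgebra k H]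
    (e : H) (he0 : e ≠ 0) (he : e * e = e)
    (hsub : (e ⊗ₜ[k] (1 : H)) * Coalgebra.comul (R := k) e
      = Coalgebra.comul (R := k) e * (e ⊗ₜ[k] (1 : H)))
    (A : Subalgebra k H)
    (hA : ∀ a ∈ A, Coalgebra.comul (R := k) a ∈
      Submodule.span k {x : H ⊗[k] H | ∃ b ∈ A, ∃ h : H, x = b ⊗ₜ[k] h})
    (heA : e ∈ A)
    (hmin : ∀ A' : Subalgebra k H,
      (∀ a ∈ A', Coalgebra.comul (R := k) a ∈
        Submodule.span k {x : H ⊗[k] H | ∃ b ∈ A', ∃ h : H, x = b ⊗ₜ[k] h}) →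
      e ∈ A' → A ≤ A')
    (B : Submodule k H)
    (hB : B = Submodule.span k {x : H | ∃ (h : H) (a : H), a ∈ A
      ∧ Coalgebra.counit (R := k) a = 0 ∧ x = h * a}) :
    {x : H | (∃ h : H, x = h * e) ∧
        TensorProduct.map B.mkQ LinearMap.id (Coalgebra.comul (R := k) x) = B.mkQ 1 ⊗ₜ[k] x}
    = {x : H | ∃ a : H,
        TensorProduct.map B.mkQ LinearMap.id (Coalgebra.comul (R := k) a) = B.mkQ 1 ⊗ₜ[k] a
        ∧ x = a * e} := by
  subst hB
  exact stmt7_general (M := A.toSubmodule) hA A.one_mem heA he
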